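/- First Fundamental Theorem for the GFD (Caputo case): Let (κ, k) be a pair of Sonine kernels from S_{−1}. Then for every f ∈ C_{−1,k}(0,∞), i.e. every f of the form f = k * φ with φ ∈ C_{−1}(0,∞), and every t > 0, (∗D_{(k)} I_{(κ)} f)(t) = f(t), where ∗D_{(k)} g = D_{(k)} g − g(0) k. -/

import Mathlib

open Real MeasureTheory Set Filter Topology

/-- The Laplace convolution `(f * g)(t) = ∫₀ᵗ f(t-τ) g(τ) dτ`. -/
noncomputable def lconv (f g : ℝ → ℝ) : ℝ → ℝ :=
  fun t => ∫ τ in (0:ℝ)..t, f (t - τ) * g τ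

/-- The space `C_{-1}(0,∞)`: functions of the form `t^p f₁(t)` with `p > -1`
and `f₁` continuous on `[0,∞)`. -/
def Cm1 (f : ℝ → ℝ) : Prop :=
  ∃ p : ℝ, -1 < p ∧ ∃ f₁ : ℝ → ℝ, ContinuousOn f₁ (Set.Ici 0) ∧
    ∀ t : ℝ, 0 < t → f t = t ^ p * f₁ t

/-- The subspace `C_{-1,0}(0,∞)`: functions of the form `t^p f₁(t)` with `-1 < p < 0`
and `f₁` continuous on `[0,∞)`. -/
def Cm10 (f : ℝ → ℝ) : Prop :=
  ∃ p : ℝ, -1 < p ∧ p < 0 ∧ ∃ f₁ : ℝ → ℝ, ContinuousOn f₁ (Set.Ici 0) ∧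
    ∀ t : ℝ, 0 < t → f t = t ^ p * f₁ t

/-!
Associativity turns `κ * f = κ * (k * φ)` into `(κ * k) * φ = 1 * φ`, so `κ * f` is almost
everywhere the primitive of `φ`, which tends to `0` at `0`: this agrees with the value of
`lconv κ f 0` as an integral over `0..0`, and the Caputo correction vanishes. Convolving with `k`,
`k * (1 * φ) = 1 * (k * φ) = 1 * f` is the primitive of `f`, whose derivative is `f` wherever `f` is
continuous. For locally integrable factors Fubini yields associativity almost everywhere; it holds
at every point when the first factor is bounded, as for the factor `1` in the second computation.
Finally `k * φ` is continuous on `(0,∞)`: cutting the convolution integral at `t / 2` separates the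
singularity of `φ` at `0` from the one of `k`, and dominated convergence applies to each half.
-/

section Convolution

variable {f f' g g' : ℝ → ℝ} {t : ℝ}

lemma lconv_comm (f g : ℝ → ℝ) : lconv f g = lconv g f := by
  ext t
  simpa [lconv, mul_comm] using
    (intervalIntegral.integral_comp_sub_left (a := 0) (b := t) (fun τ => f (t - τ) * g τ) t).symm

lemma lconv_apply_zero (f g : ℝ → ℝ) : lconv f g 0 = 0 := by
  simp [lconv]

lemma lconv_one_left (f : ℝ → ℝ) (t : ℝ) : lconv (fun _ => 1) f t = ∫ s in (0:ℝ)..t, f s := by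
  simp [lconv]

lemma lconv_congr_right (ht : 0 ≤ t) (hg : g =ᵐ[volume.restrict (Ioc 0 t)] g') :
    lconv f g t = lconv f g' t := by
  simp only [lconv, intervalIntegral.integral_of_le ht]
  refine integral_congr_ae ?_
  filter_upwards [hg] with τ hτ
  rw [hτ]

lemma lconv_congr (ht : 0 ≤ t) (hf : f =ᵐ[volume.restrict (Ioc 0 t)] f')
    (hg : g =ᵐ[volume.restrict (Ioc 0 t)] g') : lconv f g t = lconv f' g' t := by
  rw [lconv_congr_right ht hg, lconv_comm, lconv_congr_right ht hf, lconv_comm]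

lemma lconv_congr_Ioi (ht : 0 < t) (hf : f =ᵐ[volume.restrict (Ioi 0)] f')
    (hg : g =ᵐ[volume.restrict (Ioi 0)] g') : lconv f g t = lconv f' g' t :=
  lconv_congr ht.le (ae_restrict_of_ae_restrict_of_subset Ioc_subset_Ioi_self hf)
    (ae_restrict_of_ae_restrict_of_subset Ioc_subset_Ioi_self hg)

end Convolution

lemma locallyIntegrableOn_Ici_iff {E : Type*} [NormedAddCommGroup E] {f : ℝ → E} {a : ℝ} :
    LocallyIntegrableOn f (Ici a) ↔ ∀ T, IntegrableOn f (Ioc a T) := by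
  refine ⟨fun hf T => ?_, fun hf => ?_⟩
  · exact (hf.integrableOn_compact_subset Icc_subset_Ici_self isCompact_Icc).mono_set
      Ioc_subset_Icc_self
  · refine (locallyIntegrableOn_iff isClosed_Ici.isLocallyClosed).2 fun K hK hK_compact => ?_
    obtain ⟨T, hT⟩ := hK_compact.bddAbove
    have hIcc : IntegrableOn f (Icc a T) :=
      Iff.mpr integrableOn_Icc_iff_integrableOn_Ioc (hf T)
    exact hIcc.mono_set fun x hx => ⟨hK hx, hT hx⟩

lemma intervalIntegrable_of_locallyIntegrableOn_Ici {E : Type*} [NormedAddCommGroup E]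
    {f : ℝ → E} {a b : ℝ} (hf : LocallyIntegrableOn f (Ici a)) (hab : a ≤ b) :
    IntervalIntegrable f volume a b :=
  (intervalIntegrable_iff_integrableOn_Ioc_of_le hab).2 (locallyIntegrableOn_Ici_iff.1 hf b)

section Truncation

open ContinuousLinearMap (mul)
open scoped Convolution

variable {f g h : ℝ → ℝ} {t T : ℝ}

lemma convolution_eq_indicator_lconv (hf : ∀ x ≤ 0, f x = 0) (hg : ∀ x ≤ 0, g x = 0) :
    f ⋆[mul ℝ ℝ, volume] g = indicator (Ioi 0) (lconv f g) := by
  have indicator_Ioi_eq {u : ℝ → ℝ} (hu : ∀ x ≤ 0, u x = 0) : indicator (Ioi 0) u = u :=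
    indicator_eq_self.2 fun x hx => not_le.1 fun h => hx (hu x h)
  have h := posConvolution_eq_convolution_indicator f g (mul ℝ ℝ)
  rw [indicator_Ioi_eq hf, indicator_Ioi_eq hg] at h
  rw [← h, lconv_comm]
  unfold posConvolution lconv
  simp only [ContinuousLinearMap.mul_apply', mul_comm]

lemma indicator_Ioc_apply_of_nonpos (f : ℝ → ℝ) (T : ℝ) : ∀ x ≤ 0, indicator (Ioc 0 T) f x = 0 :=
  fun _ hx => indicator_of_notMem (fun h => h.1.not_ge hx) f

lemma indicator_Ioc_ae_eq (f : ℝ → ℝ) (htT : t ≤ T) :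
    indicator (Ioc 0 T) f =ᵐ[volume.restrict (Ioc 0 t)] f :=
  ae_restrict_of_forall_mem measurableSet_Ioc fun _ hx =>
    indicator_of_mem (Ioc_subset_Ioc_right htT hx) f

lemma convolution_indicator_Ioc_apply (ht : t ∈ Ioc 0 T) :
    (indicator (Ioc 0 T) f ⋆[mul ℝ ℝ, volume] indicator (Ioc 0 T) g) t = lconv f g t := by
  rw [convolution_eq_indicator_lconv (indicator_Ioc_apply_of_nonpos f T)
    (indicator_Ioc_apply_of_nonpos g T), indicator_of_mem (mem_Ioi.2 ht.1)]
  exact lconv_congr ht.1.le (indicator_Ioc_ae_eq f ht.2) (indicator_Ioc_ae_eq g ht.2)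

lemma convolution_indicator_Ioc_ae_eq (htT : t ≤ T) :
    indicator (Ioc 0 T) f ⋆[mul ℝ ℝ, volume] indicator (Ioc 0 T) g
      =ᵐ[volume.restrict (Ioc 0 t)] lconv f g :=
  ae_restrict_of_forall_mem measurableSet_Ioc fun _ hx =>
    convolution_indicator_Ioc_apply (Ioc_subset_Ioc_right htT hx)

lemma integrable_indicator_Ioc (hf : LocallyIntegrableOn f (Ici 0)) (T : ℝ) :
    Integrable (indicator (Ioc 0 T) f) :=
  (locallyIntegrableOn_Ici_iff.1 hf T).integrable_indicator measurableSet_Ioc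

lemma locallyIntegrableOn_lconv (hf : LocallyIntegrableOn f (Ici 0))
    (hg : LocallyIntegrableOn g (Ici 0)) : LocallyIntegrableOn (lconv f g) (Ici 0) := by
  refine locallyIntegrableOn_Ici_iff.2 fun T => ?_
  have hconv := (integrable_indicator_Ioc hf T).integrable_convolution (mul ℝ ℝ)
    (integrable_indicator_Ioc hg T)
  exact hconv.integrableOn.congr_fun_ae (convolution_indicator_Ioc_ae_eq le_rfl)

lemma lconv_assoc_of_convolutionExistsAt (ht : t ∈ Ioc 0 T) (hf : LocallyIntegrableOn f (Ici 0))
    (hg : LocallyIntegrableOn g (Ici 0)) (hh : LocallyIntegrableOn h (Ici 0))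
    (hfgh : ConvolutionExistsAt (fun x => ‖indicator (Ioc 0 T) f x‖)
      ((fun x => ‖indicator (Ioc 0 T) g x‖) ⋆[mul ℝ ℝ, volume]
        fun x => ‖indicator (Ioc 0 T) h x‖) t (mul ℝ ℝ) volume) :
    lconv (lconv f g) h t = lconv f (lconv g h) t := by
  set F := indicator (Ioc 0 T) f
  set G := indicator (Ioc 0 T) g
  set H := indicator (Ioc 0 T) h
  have hF : Integrable F := integrable_indicator_Ioc hf T
  have hG : Integrable G := integrable_indicator_Ioc hg T
  have hH : Integrable H := integrable_indicator_Ioc hh T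
  have F_zero : ∀ x ≤ 0, F x = 0 := indicator_Ioc_apply_of_nonpos f T
  have G_zero : ∀ x ≤ 0, G x = 0 := indicator_Ioc_apply_of_nonpos g T
  have H_zero : ∀ x ≤ 0, H x = 0 := indicator_Ioc_apply_of_nonpos h T
  have conv_zero {u v : ℝ → ℝ} (hu : ∀ x ≤ 0, u x = 0) (hv : ∀ x ≤ 0, v x = 0) :
      ∀ x ≤ 0, (u ⋆[mul ℝ ℝ, volume] v) x = 0 := fun x hx => by
    rw [convolution_eq_indicator_lconv hu hv, indicator_of_notMem (notMem_Ioi.2 hx)]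
  calc lconv (lconv f g) h t
      = lconv (F ⋆[mul ℝ ℝ, volume] G) H t :=
        (lconv_congr ht.1.le (convolution_indicator_Ioc_ae_eq ht.2)
          (indicator_Ioc_ae_eq h ht.2)).symm
    _ = ((F ⋆[mul ℝ ℝ, volume] G) ⋆[mul ℝ ℝ, volume] H) t := by
        rw [convolution_eq_indicator_lconv (conv_zero F_zero G_zero) H_zero,
          indicator_of_mem (mem_Ioi.2 ht.1)]
    _ = (F ⋆[mul ℝ ℝ, volume] (G ⋆[mul ℝ ℝ, volume] H)) t :=
        convolution_assoc _ _ _ _ (fun x y z => mul_assoc x y z) hF.aestronglyMeasurable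
          hG.aestronglyMeasurable hH.aestronglyMeasurable (hF.ae_convolution_exists _ hG)
          (hG.norm.ae_convolution_exists _ hH.norm) hfgh
    _ = lconv F (G ⋆[mul ℝ ℝ, volume] H) t := by
        rw [convolution_eq_indicator_lconv F_zero (conv_zero G_zero H_zero),
          indicator_of_mem (mem_Ioi.2 ht.1)]
    _ = lconv f (lconv g h) t :=
        lconv_congr ht.1.le (indicator_Ioc_ae_eq f ht.2) (convolution_indicator_Ioc_ae_eq ht.2)

lemma lconv_assoc_ae (hf : LocallyIntegrableOn f (Ici 0)) (hg : LocallyIntegrableOn g (Ici 0))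
    (hh : LocallyIntegrableOn h (Ici 0)) :
    lconv (lconv f g) h =ᵐ[volume.restrict (Ioi 0)] lconv f (lconv g h) := by
  have exists_up_to (n : ℕ) := (integrable_indicator_Ioc hf n).norm.ae_convolution_exists (mul ℝ ℝ)
    ((integrable_indicator_Ioc hg n).norm.integrable_convolution (mul ℝ ℝ)
      (integrable_indicator_Ioc hh n).norm)
  filter_upwards [ae_restrict_of_ae (ae_all_iff.2 exists_up_to),
    ae_restrict_mem measurableSet_Ioi] with t hexists ht
  exact lconv_assoc_of_convolutionExistsAt ⟨ht, Nat.le_ceil t⟩ hf hg hh (hexists _)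

lemma lconv_assoc_of_bounded {C : ℝ} (ht : 0 < t) (hf : LocallyIntegrableOn f (Ici 0))
    (hC : ∀ s ∈ Ioc 0 t, |f s| ≤ C) (hg : LocallyIntegrableOn g (Ici 0))
    (hh : LocallyIntegrableOn h (Ici 0)) : lconv (lconv f g) h t = lconv f (lconv g h) t := by
  refine lconv_assoc_of_convolutionExistsAt ⟨ht, le_rfl⟩ hf hg hh ?_
  have hgh := (integrable_indicator_Ioc hg t).norm.integrable_convolution (mul ℝ ℝ)
    (integrable_indicator_Ioc hh t).norm
  refine (hgh.comp_sub_left t).bdd_mul (c := max C 0)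
    (integrable_indicator_Ioc hf t).norm.aestronglyMeasurable (ae_of_all _ fun s => ?_)
  rw [norm_norm]
  by_cases hs : s ∈ Ioc 0 t
  · simpa [hs] using Or.inl (hC s hs)
  · simp [hs]

lemma lconv_primitive_right (ht : 0 < t) (hf : LocallyIntegrableOn f (Ici 0))
    (hg : LocallyIntegrableOn g (Ici 0)) :
    lconv f (fun s => ∫ τ in (0:ℝ)..s, g τ) t = ∫ s in (0:ℝ)..t, lconv f g s := by
  have hone : LocallyIntegrableOn (fun _ : ℝ => (1 : ℝ)) (Ici 0) := locallyIntegrableOn_const 1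
  have hassoc := lconv_assoc_of_bounded (C := 1) ht hone (by simp) hg hf
  rw [lconv_one_left, lconv_comm g f, lconv_comm _ f] at hassoc
  simpa only [← lconv_one_left] using hassoc

end Truncation

section Continuity

variable {f g : ℝ → ℝ} {t : ℝ}

lemma intervalIntegrable_lconv_integrand_half (hf : ContinuousOn f (Ioi 0))
    (hg : LocallyIntegrableOn g (Ici 0)) (ht : 0 < t) :
    IntervalIntegrable (fun τ => f (t - τ) * g τ) volume 0 (t / 2) := by
  refine (intervalIntegrable_of_locallyIntegrableOn_Ici hg (half_pos ht).le).continuousOn_mul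
    (hf.comp (by fun_prop) fun τ hτ => ?_)
  rw [uIcc_of_le (half_pos ht).le] at hτ
  exact sub_pos.2 (hτ.2.trans_lt (half_lt_self ht))

lemma lconv_eq_add_half (hf : LocallyIntegrableOn f (Ici 0)) (hfc : ContinuousOn f (Ioi 0))
    (hg : LocallyIntegrableOn g (Ici 0)) (hgc : ContinuousOn g (Ioi 0)) (ht : 0 < t) :
    lconv f g t =
      (∫ τ in (0:ℝ)..t / 2, f (t - τ) * g τ) + ∫ τ in (0:ℝ)..t / 2, g (t - τ) * f τ := by
  have hleft := intervalIntegrable_lconv_integrand_half hfc hg ht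
  have hright := (intervalIntegrable_lconv_integrand_half hgc hf ht).comp_sub_left t
  have reflect := intervalIntegral.integral_comp_sub_left (a := 0) (b := t / 2)
    (fun τ => f (t - τ) * g τ) t
  simp only [sub_sub_cancel, sub_zero, sub_half, mul_comm (g _)] at hright reflect ⊢
  rw [lconv, reflect, intervalIntegral.integral_add_adjacent_intervals hleft hright.symm]

lemma exists_norm_indicator_half_le (hf : ContinuousOn f (Ioi 0)) (g : ℝ → ℝ) (ht : 0 < t) :
    ∃ C, ∀ x ∈ Ioo (t / 2) (2 * t), ∀ τ,
      ‖indicator (Ioc 0 (x / 2)) (fun τ => f (x - τ) * g τ) τ‖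
        ≤ C * indicator (Ioc 0 t) (fun τ => ‖g τ‖) τ := by
  obtain ⟨C, hC⟩ := (isCompact_Icc (a := t / 4) (b := 2 * t)).exists_bound_of_continuousOn
    (hf.mono fun x hx => mem_Ioi.2 (by linarith [hx.1]))
  have hC_nonneg : 0 ≤ C := (norm_nonneg _).trans (hC t ⟨by linarith, by linarith⟩)
  refine ⟨C, fun x hx τ => ?_⟩
  by_cases hτ : τ ∈ Ioc 0 (x / 2)
  · have hτ' : τ ∈ Ioc 0 t := ⟨hτ.1, by linarith [hτ.2, hx.2]⟩
    rw [indicator_of_mem hτ, indicator_of_mem hτ', norm_mul]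
    gcongr
    exact hC _ ⟨by linarith [hτ.2, hx.1], by linarith [hτ.1, hx.2]⟩
  · rw [indicator_of_notMem hτ, norm_zero]
    exact mul_nonneg hC_nonneg (indicator_nonneg (fun _ _ => norm_nonneg _) τ)

lemma continuousAt_indicator_half (hf : ContinuousOn f (Ioi 0)) (g : ℝ → ℝ) {τ : ℝ} (ht : 0 < t)
    (hτ : τ ≠ t / 2) :
    ContinuousAt (fun x => indicator (Ioc 0 (x / 2)) (fun τ => f (x - τ) * g τ) τ) t := by
  have half_tendsto : Tendsto (fun x : ℝ => x / 2) (𝓝 t) (𝓝 (t / 2)) := tendsto_id.div_const 2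
  rcases hτ.lt_or_gt with hlt | hgt
  · have hcont : ContinuousAt (fun x => indicator (Ioi 0) (fun τ => f (x - τ) * g τ) τ) t := by
      by_cases hτ0 : τ ∈ Ioi 0
      · simp only [indicator_of_mem hτ0]
        have hf_at : ContinuousAt f (t - τ) := hf.continuousAt (Ioi_mem_nhds (by linarith))
        exact (ContinuousAt.comp (f := fun x => x - τ) hf_at (by fun_prop)).mul continuousAt_const
      · simpa only [indicator_of_notMem hτ0] using continuousAt_const
    refine hcont.congr ?_
    filter_upwards [half_tendsto.eventually_const_lt hlt] with x hx
    simp only [indicator, mem_Ioi, mem_Ioc, hx.le, and_true]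
  · refine continuousAt_const.congr (f := fun _ => (0 : ℝ)) ?_
    filter_upwards [half_tendsto.eventually_lt_const hgt] with x hx
    exact (indicator_of_notMem (fun h => h.2.not_gt hx) _).symm

lemma continuousAt_integral_half (hf : ContinuousOn f (Ioi 0))
    (hg : LocallyIntegrableOn g (Ici 0)) (ht : 0 < t) :
    ContinuousAt (fun x => ∫ τ in (0:ℝ)..x / 2, f (x - τ) * g τ) t := by
  obtain ⟨C, hC⟩ := exists_norm_indicator_half_le hf g ht
  have near : Ioo (t / 2) (2 * t) ∈ 𝓝 t := Ioo_mem_nhds (by linarith) (by linarith)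
  have hcont : ContinuousAt
      (fun x => ∫ τ, indicator (Ioc 0 (x / 2)) (fun τ => f (x - τ) * g τ) τ) t := by
    refine continuousAt_of_dominated (bound := fun τ => C * indicator (Ioc 0 t) (fun τ => ‖g τ‖) τ)
      ?_ ?_ ((integrable_indicator_Ioc hg.norm t).const_mul C) ?_
    · filter_upwards [Ioi_mem_nhds ht] with x hx
      exact (aestronglyMeasurable_indicator_iff measurableSet_Ioc).2
        (intervalIntegrable_lconv_integrand_half hf hg hx).1.aestronglyMeasurable
    · filter_upwards [near] with x hx using ae_of_all _ (hC x hx)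
    · filter_upwards [compl_mem_ae_iff.2 (measure_singleton (t / 2))] with τ hτ
      exact continuousAt_indicator_half hf g ht hτ
  refine hcont.congr ?_
  filter_upwards [Ioi_mem_nhds ht] with x hx
  rw [integral_indicator measurableSet_Ioc, intervalIntegral.integral_of_le (half_pos hx).le]

lemma continuousOn_lconv (hf : LocallyIntegrableOn f (Ici 0)) (hfc : ContinuousOn f (Ioi 0))
    (hg : LocallyIntegrableOn g (Ici 0)) (hgc : ContinuousOn g (Ioi 0)) :
    ContinuousOn (lconv f g) (Ioi 0) := by
  refine ContinuousOn.congr (fun t ht => ContinuousAt.continuousWithinAt ?_)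
    fun t ht => lconv_eq_add_half hf hfc hg hgc ht
  exact (continuousAt_integral_half hfc hg ht).add (continuousAt_integral_half hgc hf ht)

end Continuity

namespace Cm1

variable {f : ℝ → ℝ}

lemma continuousOn (hf : Cm1 f) : ContinuousOn f (Ioi 0) := by
  obtain ⟨p, -, f₁, hf₁, hf_eq⟩ := hf
  have hpow : ContinuousOn (fun t : ℝ => t ^ p) (Ioi 0) :=
    continuousOn_id.rpow_const fun t ht => Or.inl ht.ne'
  exact (hpow.mul (hf₁.mono Ioi_subset_Ici_self)).congr hf_eq

lemma locallyIntegrableOn (hf : Cm1 f) : LocallyIntegrableOn f (Ici 0) := by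
  obtain ⟨p, hp, f₁, hf₁, hf_eq⟩ := hf
  have hpow : LocallyIntegrableOn (fun t : ℝ => t ^ p) (Ici 0) :=
    locallyIntegrableOn_Ici_iff.2 fun T => (intervalIntegral.intervalIntegrable_rpow' hp).1
  refine (hpow.mul_continuousOn hf₁ isClosed_Ici.isLocallyClosed).congr ?_
  rw [← restrict_Ioi_eq_restrict_Ici]
  exact ae_restrict_of_forall_mem measurableSet_Ioi fun t ht => (hf_eq t ht).symm

end Cm1

lemma Cm10.cm1 {f : ℝ → ℝ} (hf : Cm10 f) : Cm1 f :=
  let ⟨p, hp, _, hf⟩ := hf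
  ⟨p, hp, hf⟩

/-- A pair of Sonine kernels that are locally integrable on `[0,∞)`. The identity `κ * k = 1` is
required almost everywhere because such a convolution need not exist at every point. -/
structure IsSoninePair (κ k : ℝ → ℝ) : Prop where
  locallyIntegrableOn_left : LocallyIntegrableOn κ (Ici 0)
  locallyIntegrableOn_right : LocallyIntegrableOn k (Ici 0)
  lconv_ae_eq_one : lconv κ k =ᵐ[volume.restrict (Ioi 0)] fun _ => 1

section FundamentalTheorem

variable {κ k f φ : ℝ → ℝ}

lemma lconv_ae_eq_primitive (h : IsSoninePair κ k) (hφ : LocallyIntegrableOn φ (Ici 0))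
    (hf : f =ᵐ[volume.restrict (Ioi 0)] lconv k φ) :
    lconv κ f =ᵐ[volume.restrict (Ioi 0)] fun t => ∫ s in (0:ℝ)..t, φ s := by
  filter_upwards [lconv_assoc_ae h.locallyIntegrableOn_left h.locallyIntegrableOn_right hφ,
    ae_restrict_mem measurableSet_Ioi] with t hassoc ht
  calc lconv κ f t
      = lconv κ (lconv k φ) t := lconv_congr_Ioi ht .rfl hf
    _ = lconv (lconv κ k) φ t := hassoc.symm
    _ = lconv (fun _ => 1) φ t := lconv_congr_Ioi ht h.lconv_ae_eq_one .rfl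
    _ = ∫ s in (0:ℝ)..t, φ s := lconv_one_left φ t

lemma lconv_lconv_eq_primitive (h : IsSoninePair κ k) (hφ : LocallyIntegrableOn φ (Ici 0))
    (hf : f =ᵐ[volume.restrict (Ioi 0)] lconv k φ) {t : ℝ} (ht : 0 < t) :
    lconv k (lconv κ f) t = ∫ s in (0:ℝ)..t, f s :=
  calc lconv k (lconv κ f) t
      = lconv k (fun s => ∫ τ in (0:ℝ)..s, φ τ) t :=
        lconv_congr_Ioi ht .rfl (lconv_ae_eq_primitive h hφ hf)
    _ = ∫ s in (0:ℝ)..t, lconv k φ s := lconv_primitive_right ht h.locallyIntegrableOn_right hφ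
    _ = lconv (fun _ => 1) (lconv k φ) t := (lconv_one_left _ t).symm
    _ = lconv (fun _ => 1) f t := lconv_congr_Ioi ht .rfl hf.symm
    _ = ∫ s in (0:ℝ)..t, f s := lconv_one_left f t

lemma hasDerivAt_lconv_lconv (h : IsSoninePair κ k) (hφ : LocallyIntegrableOn φ (Ici 0))
    (hf : f =ᵐ[volume.restrict (Ioi 0)] lconv k φ) {t : ℝ} (ht : 0 < t)
    (hft : ContinuousAt f t) :
    HasDerivAt (lconv k (lconv κ f)) (f t) t := by
  have hf_int : LocallyIntegrableOn f (Ici 0) :=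
    (locallyIntegrableOn_lconv h.locallyIntegrableOn_right hφ).congr
      (by rw [← restrict_Ioi_eq_restrict_Ici]; exact hf.symm)
  have hprimitive : HasDerivAt (fun x => ∫ s in (0:ℝ)..x, f s) (f t) t :=
    intervalIntegral.integral_hasDerivAt_right
      (intervalIntegrable_of_locallyIntegrableOn_Ici hf_int ht.le)
      ⟨Ici 0, Ici_mem_nhds ht, hf_int.aestronglyMeasurable⟩ hft
  refine hprimitive.congr_of_eventuallyEq ?_
  filter_upwards [Ioi_mem_nhds ht] with x hx
  exact lconv_lconv_eq_primitive h hφ hf hx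

theorem statement5_general (h : IsSoninePair κ k) (hφ : LocallyIntegrableOn φ (Ici 0))
    (hf : f =ᵐ[volume.restrict (Ioi 0)] lconv k φ) {t : ℝ} (ht : 0 < t)
    (hft : ContinuousAt f t) :
    DifferentiableAt ℝ (lconv k (lconv κ f)) t ∧
      deriv (lconv k (lconv κ f)) t - lconv κ f 0 * k t = f t := by
  have hderiv := hasDerivAt_lconv_lconv h hφ hf ht hft
  exact ⟨hderiv.differentiableAt, by simp [hderiv.deriv, lconv_apply_zero]⟩

end FundamentalTheorem

/-- First Fundamental Theorem for the GFD, Caputo case: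
for a Sonine pair `(κ, k)` from `S_{-1}` and `f ∈ C_{-1,k}(0,∞)`, i.e. `f = k * φ` with
`φ ∈ C_{-1}(0,∞)`, one has `(∗D_{(k)} I_{(κ)} f)(t) = f(t)` for all `t > 0`, where
`∗D_{(k)} g = D_{(k)} g - g(0)·k`. -/
theorem statement5 (κ k : ℝ → ℝ) (hκ : Cm10 κ) (hk : Cm10 k)
    (hSonine : ∀ t : ℝ, 0 < t → lconv κ k t = 1)
    (f φ : ℝ → ℝ) (hφ : Cm1 φ)
    (hf : ∀ t : ℝ, 0 < t → f t = lconv k φ t) :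
    ∀ t : ℝ, 0 < t →
      DifferentiableAt ℝ (lconv k (lconv κ f)) t ∧
      deriv (lconv k (lconv κ f)) t - (lconv κ f) 0 * k t = f t := by
  intro t ht
  have hf_cont : ContinuousOn f (Ioi 0) := (continuousOn_lconv hk.cm1.locallyIntegrableOn
    hk.cm1.continuousOn hφ.locallyIntegrableOn hφ.continuousOn).congr hf
  have hpair : IsSoninePair κ k := ⟨hκ.cm1.locallyIntegrableOn, hk.cm1.locallyIntegrableOn,
    ae_restrict_of_forall_mem measurableSet_Ioi hSonine⟩
  exact statement5_general hpair hφ.locallyIntegrableOn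
    (ae_restrict_of_forall_mem measurableSet_Ioi hf) ht (hf_cont.continuousAt (Ioi_mem_nhds ht))
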